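/- For every N-element point set P in [0,1)^d, the squared extreme L₂-discrepancy admits the Haar expansion L₂ᵉˣᵗʳ_N(P)² = ∑_{j ∈ ℕ₀^d} 2^{|j|} ∑_{m ∈ D_j} |⟨Δ_P([0,·)), h_{j,m}⟩|², i.e., it equals the sum of squared (normalized) Haar coefficients of the anchored local discrepancy function over all levels j with no coordinate equal to −1. -/

import Mathlib

open MeasureTheory Set
open scoped Classical

/-- The one-dimensional dyadic Haar function `h_{j,m}`: `+1` on the left half
of the dyadic interval `I_{j,m} = [m/2^j, (m+1)/2^j)`, `-1` on the right half,
`0` elsewhere. -/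
noncomputable def haar1 (j m : ℕ) (x : ℝ) : ℝ :=
  if x ∈ Set.Ico ((m : ℝ) / 2 ^ j) (((m : ℝ) + 1 / 2) / 2 ^ j) then 1
  else if x ∈ Set.Ico (((m : ℝ) + 1 / 2) / 2 ^ j) (((m : ℝ) + 1) / 2 ^ j) then -1
  else 0

/-- The dyadic interval `I_{j,m} = [m/2^j, (m+1)/2^j)`. -/
def dyadicI (j m : ℕ) : Set ℝ := Set.Ico ((m : ℝ) / 2 ^ j) (((m : ℝ) + 1) / 2 ^ j)

/-- The unit cube `[0,1)^d`. -/
def unitBox (d : ℕ) : Set (Fin d → ℝ) := Set.univ.pi fun _ => Set.Ico (0 : ℝ) 1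

/-- The tensor product Haar function `h_{j,m}` on `[0,1)^d`. -/
noncomputable def haarD {d : ℕ} (j m : Fin d → ℕ) (x : Fin d → ℝ) : ℝ :=
  ∏ i, haar1 (j i) (m i) (x i)

/-- The dyadic box `I_{j,m} ⊆ [0,1)^d`. -/
def dyadicBox {d : ℕ} (j m : Fin d → ℕ) : Set (Fin d → ℝ) :=
  Set.univ.pi fun i => dyadicI (j i) (m i)

/-- The Haar coefficient `⟨f, h_{j,m}⟩ = ∫_{[0,1)^d} f·h_{j,m}`. -/
noncomputable def haarCoef {d : ℕ} (f : (Fin d → ℝ) → ℝ) (j m : Fin d → ℕ) : ℝ :=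
  ∫ x in unitBox d, f x * haarD j m x

/-- The anchored local discrepancy `Δ_P([0,t))` of the point set `P`. -/
noncomputable def discAnch {d N : ℕ} (P : Fin N → Fin d → ℝ) (t : Fin d → ℝ) : ℝ :=
  ((Finset.univ.filter fun i => ∀ k, 0 ≤ P i k ∧ P i k < t k).card : ℝ) / N
    - ∏ k, t k

/-- The local discrepancy `Δ_P([a,b))` of the point set `P` on the box `[a,b)`. -/
noncomputable def discBoxFn {d N : ℕ} (P : Fin N → Fin d → ℝ) (a b : Fin d → ℝ) : ℝ :=
  ((Finset.univ.filter fun i => ∀ k, a k ≤ P i k ∧ P i k < b k).card : ℝ) / N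
    - ∏ k, (b k - a k)

/-- Squared extreme (unanchored) `L₂`-discrepancy. -/
noncomputable def L2extrSq {d N : ℕ} (P : Fin N → Fin d → ℝ) : ℝ :=
  ∫ x in unitBox d, ∫ y in unitBox d,
    (if x ≤ y then (discBoxFn P x y) ^ 2 else 0)

/-- The squared (product dyadic) BMO seminorm of `f`, via Haar coefficients. -/
noncomputable def bmoSq {d : ℕ} (f : (Fin d → ℝ) → ℝ) : ℝ :=
  ⨆ U : {U : Set (Fin d → ℝ) // MeasurableSet U ∧ U ⊆ unitBox d ∧ 0 < volume U},
    (volume U.1).toReal⁻¹ *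
      ∑' j : Fin d → ℕ, (2 : ℝ) ^ (∑ i, j i) *
        ∑ m ∈ Fintype.piFinset (fun i => Finset.range (2 ^ j i)),
          (if dyadicBox j m ⊆ U.1 then (haarCoef f j m) ^ 2 else 0)

/-!
The local discrepancy of a box is a linear combination of tensor products of one-variable functions
(the volume, and one product of step functions per point), and so is its anchored version, with
increments `f y - f x` in place of values `f x`. Squaring and integrating, both sides of the
expansion become the same combination of products of one-dimensional quantities. On the side of the
extreme discrepancy these are
`∫∫_{x ≤ y} (f y - f x) (g y - g x) = (1/2) ∫∫ (f y - f x) (g y - g x) = cov(f, g)`;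
on the Haar side they are sums of products of Haar coefficients over the levels `j ≥ 0`, which give
`∫ f g - (∫ f) (∫ g) = cov(f, g)` by Parseval's identity, since the level `-1` that is left out
carries exactly the product of the means.

Parseval's identity for one function `f` follows by telescoping: the level `j` carries the growth
from `j` to `j + 1` of the squared norm of the dyadic averages of `f`, and these norms converge to
the norm of `f` because continuous functions are dense in `L²`.
-/

/-! ### Integrals of sums of tensor products -/

section TensorSum

open ProbabilityTheory

variable {ι κ Ω : Type*} [Fintype ι] [Fintype κ]

/-- The linear combination `x ↦ ∑ a, c a * ∏ k, f a k (x k)` of tensor products of functions of one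
variable. -/
def tensorSum (c : ι → ℝ) (f : ι → κ → Ω → ℝ) (x : κ → Ω) : ℝ :=
  ∑ a, c a * ∏ k, f a k (x k)

/-- The increment of `tensorSum c f` over the box with corners `x` and `y`, that is, the alternating
sum of the values of `tensorSum c f` at the vertices of this box. -/
def tensorIncrement (c : ι → ℝ) (f : ι → κ → Ω → ℝ) (x y : κ → Ω) : ℝ :=
  ∑ a, c a * ∏ k, (f a k (y k) - f a k (x k))

theorem sum_mul_prod_sq (c : ι → ℝ) (u : ι → κ → ℝ) :
    (∑ a, c a * ∏ k, u a k) ^ 2 =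
      ∑ p : ι × ι, c p.1 * c p.2 * ∏ k, u p.1 k * u p.2 k := by
  rw [sq, Fintype.sum_mul_sum, Fintype.sum_prod_type]
  refine Finset.sum_congr rfl fun a _ => Finset.sum_congr rfl fun b _ => ?_
  rw [Finset.prod_mul_distrib, mul_mul_mul_comm]

theorem integral_tensorSum [MeasurableSpace Ω] {μ : κ → Measure Ω} [∀ k, SigmaFinite (μ k)]
    {f : ι → κ → Ω → ℝ} (c : ι → ℝ) (hf : ∀ a k, Integrable (f a k) (μ k)) :
    ∫ x, tensorSum c f x ∂Measure.pi μ = ∑ a, c a * ∏ k, ∫ t, f a k t ∂μ k := by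
  unfold tensorSum
  rw [integral_finsetSum _ fun a _ => (Integrable.fintype_prod_dep (hf a)).const_mul (c a)]
  simp only [integral_const_mul, integral_fintype_prod_eq_prod]

/-! ### Covariance as an integral of products of increments -/

theorem integral_mul_sub_eq_two_mul_covariance [MeasurableSpace Ω] {μ : Measure Ω}
    [IsProbabilityMeasure μ] {f g : Ω → ℝ} (hf : MemLp f 2 μ) (hg : MemLp g 2 μ) :
    ∫ z : Ω × Ω, (f z.2 - f z.1) * (g z.2 - g z.1) ∂μ.prod μ = 2 * cov[f, g; μ] := by
  have hff := (hf.integrable_mul hg).comp_fst μ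
  have hss := (hf.integrable_mul hg).comp_snd μ
  have hfs := (hf.integrable one_le_two).mul_prod (hg.integrable one_le_two)
  have hsf := (hg.integrable one_le_two).mul_prod (hf.integrable one_le_two)
  have hdiag : Integrable (fun z : Ω × Ω => (f * g) z.2 + (f * g) z.1) (μ.prod μ) := hss.add hff
  have hmixed : Integrable (fun z : Ω × Ω => f z.1 * g z.2 + g z.1 * f z.2) (μ.prod μ) :=
    hfs.add hsf
  calc ∫ z : Ω × Ω, (f z.2 - f z.1) * (g z.2 - g z.1) ∂μ.prod μ
      = ∫ z : Ω × Ω, ((f * g) z.2 + (f * g) z.1) - (f z.1 * g z.2 + g z.1 * f z.2) ∂μ.prod μ := by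
        congr with z
        simp only [Pi.mul_apply]
        ring
    _ = ((∫ x, (f * g) x ∂μ) + ∫ x, (f * g) x ∂μ)
          - ((∫ x, f x ∂μ) * (∫ x, g x ∂μ) + (∫ x, g x ∂μ) * ∫ x, f x ∂μ) := by
        rw [integral_sub hdiag hmixed, integral_add hss hff, integral_add hfs hsf,
          integral_fun_snd, integral_fun_fst, integral_prod_mul, integral_prod_mul,
          probReal_univ, one_smul]
    _ = 2 * cov[f, g; μ] := by
        rw [covariance_eq_sub hf hg]
        ring

/-- The product of the increments of `f` and `g` over `[x, y]`, set to `0` unless `x ≤ y`. -/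
def incrementMul [LE Ω] [DecidableLE Ω] (f g : Ω → ℝ) (x y : Ω) : ℝ :=
  if x ≤ y then (f y - f x) * (g y - g x) else 0

theorem incrementMul_add_swap [LinearOrder Ω] (f g : Ω → ℝ) (x y : Ω) :
    incrementMul f g x y + incrementMul f g y x = (f y - f x) * (g y - g x) := by
  unfold incrementMul
  rcases lt_trichotomy x y with h | rfl | h
  · simp [h.le, h.not_ge]
  · simp
  · simp only [h.le, h.not_ge, if_true, if_false]
    ring

theorem ite_tensorIncrement_sq [LinearOrder Ω] (c : ι → ℝ) (f : ι → κ → Ω → ℝ) (x y : κ → Ω) :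
    (if x ≤ y then tensorIncrement c f x y ^ 2 else 0) =
      tensorSum (fun p : ι × ι => c p.1 * c p.2)
        (fun p k => incrementMul (f p.1 k) (f p.2 k) (x k)) y := by
  unfold tensorSum tensorIncrement incrementMul
  simp only [Finset.prod_ite_zero, Finset.mem_univ, forall_true_left]
  by_cases h : x ≤ y
  · simp only [h, if_true, sum_mul_prod_sq, Pi.le_def.1 h, implies_true]
  · simp only [h, if_false, Pi.le_def.not.1 h, mul_zero, Finset.sum_const_zero]

variable [LinearOrder Ω] [TopologicalSpace Ω] [OrderClosedTopology Ω] [MeasurableSpace Ω]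
  [OpensMeasurableSpace Ω]

theorem integrable_incrementMul_left {μ : Measure Ω} [IsFiniteMeasure μ] {f g : Ω → ℝ}
    (hf : MemLp f 2 μ) (hg : MemLp g 2 μ) (x : Ω) :
    Integrable (incrementMul f g x) μ := by
  have hmul := (hf.sub (memLp_const (f x))).integrable_mul (hg.sub (memLp_const (g x)))
  refine (hmul.indicator (measurableSet_Ici (a := x))).congr (.of_forall fun y => ?_)
  simp only [incrementMul, indicator, mem_Ici, Pi.mul_apply, Pi.sub_apply]

variable [SecondCountableTopology Ω]

theorem integrable_incrementMul {μ : Measure Ω} [IsFiniteMeasure μ] {f g : Ω → ℝ}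
    (hf : MemLp f 2 μ) (hg : MemLp g 2 μ) :
    Integrable (fun z : Ω × Ω => incrementMul f g z.1 z.2) (μ.prod μ) := by
  have hmul := ((hf.comp_snd μ).sub (hf.comp_fst μ)).integrable_mul
    ((hg.comp_snd μ).sub (hg.comp_fst μ))
  have hle : MeasurableSet {z : Ω × Ω | z.1 ≤ z.2} := measurableSet_le measurable_fst measurable_snd
  refine (hmul.indicator hle).congr (.of_forall fun z => ?_)
  simp only [incrementMul, indicator, mem_ofPred_eq, Pi.mul_apply, Pi.sub_apply]

theorem integral_incrementMul {μ : Measure Ω} [IsProbabilityMeasure μ] {f g : Ω → ℝ}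
    (hf : MemLp f 2 μ) (hg : MemLp g 2 μ) :
    ∫ x, ∫ y, incrementMul f g x y ∂μ ∂μ = cov[f, g; μ] := by
  have hint := integrable_incrementMul hf hg
  have hint_swap : Integrable (fun z : Ω × Ω => incrementMul f g z.2 z.1) (μ.prod μ) := hint.swap
  have hswap := integral_prod_swap (μ := μ) (ν := μ) fun z : Ω × Ω => incrementMul f g z.1 z.2
  simp only [Prod.fst_swap, Prod.snd_swap] at hswap
  have hsum := integral_mul_sub_eq_two_mul_covariance hf hg
  simp only [← incrementMul_add_swap f g] at hsum
  rw [integral_add hint hint_swap] at hsum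
  rw [integral_integral hint]
  linarith

theorem integral_integral_tensorIncrement_sq {μ : κ → Measure Ω} [∀ k, IsProbabilityMeasure (μ k)]
    {f : ι → κ → Ω → ℝ} (c : ι → ℝ) (hf : ∀ a k, MemLp (f a k) 2 (μ k)) :
    ∫ x, ∫ y, (if x ≤ y then tensorIncrement c f x y ^ 2 else 0) ∂Measure.pi μ ∂Measure.pi μ =
      ∑ p : ι × ι, c p.1 * c p.2 * ∏ k, cov[f p.1 k, f p.2 k; μ k] := by
  have hinner (x : κ → Ω) :
      ∫ y, (if x ≤ y then tensorIncrement c f x y ^ 2 else 0) ∂Measure.pi μ =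
        tensorSum (fun p : ι × ι => c p.1 * c p.2)
          (fun p k t => ∫ s, incrementMul (f p.1 k) (f p.2 k) t s ∂μ k) x := by
    simp only [ite_tensorIncrement_sq]
    exact integral_tensorSum _ fun p k => integrable_incrementMul_left (hf p.1 k) (hf p.2 k) (x k)
  simp only [hinner]
  have hint (p : ι × ι) (k : κ) :
      Integrable (fun t => ∫ s, incrementMul (f p.1 k) (f p.2 k) t s ∂μ k) (μ k) :=
    (integrable_incrementMul (hf p.1 k) (hf p.2 k)).integral_prod_left
  rw [integral_tensorSum _ hint]
  simp only [integral_incrementMul (hf _ _) (hf _ _)]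

end TensorSum

/-! ### Dyadic intervals -/

section DyadicInterval

theorem measurableSet_dyadicI (j m : ℕ) : MeasurableSet (dyadicI j m) :=
  measurableSet_Ico

theorem dyadicI_succ_two_mul (j m : ℕ) :
    dyadicI (j + 1) (2 * m) = Ico ((m : ℝ) / 2 ^ j) (((m : ℝ) + 1 / 2) / 2 ^ j) := by
  unfold dyadicI
  congr 1 <;> push_cast <;> field_simp <;> ring

theorem dyadicI_succ_two_mul_add_one (j m : ℕ) :
    dyadicI (j + 1) (2 * m + 1) =
      Ico (((m : ℝ) + 1 / 2) / 2 ^ j) (((m : ℝ) + 1) / 2 ^ j) := by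
  unfold dyadicI
  congr 1 <;> push_cast <;> field_simp <;> ring

theorem disjoint_dyadicI_succ (j m : ℕ) :
    Disjoint (dyadicI (j + 1) (2 * m)) (dyadicI (j + 1) (2 * m + 1)) := by
  rw [dyadicI_succ_two_mul, dyadicI_succ_two_mul_add_one, Ico_disjoint_Ico]
  exact (min_le_left _ _).trans (le_max_right _ _)

theorem dyadicI_succ_union (j m : ℕ) :
    dyadicI (j + 1) (2 * m) ∪ dyadicI (j + 1) (2 * m + 1) = dyadicI j m := by
  rw [dyadicI_succ_two_mul, dyadicI_succ_two_mul_add_one, dyadicI]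
  exact Ico_union_Ico_eq_Ico (by gcongr; linarith) (by gcongr; linarith)

theorem haar1_eq_indicator_sub (j m : ℕ) (x : ℝ) :
    haar1 j m x = (dyadicI (j + 1) (2 * m)).indicator 1 x
      - (dyadicI (j + 1) (2 * m + 1)).indicator 1 x := by
  have hdisj := (disjoint_dyadicI_succ j m).notMem_of_mem_left (a := x)
  simp only [haar1, ← dyadicI_succ_two_mul, ← dyadicI_succ_two_mul_add_one, indicator, Pi.one_apply]
  split_ifs with hl hr <;> simp_all

theorem setIntegral_dyadicI_eq_add {μ : Measure ℝ} {f : ℝ → ℝ} {j m : ℕ}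
    (hf : IntegrableOn f (dyadicI j m) μ) :
    ∫ x in dyadicI j m, f x ∂μ =
      (∫ x in dyadicI (j + 1) (2 * m), f x ∂μ) + ∫ x in dyadicI (j + 1) (2 * m + 1), f x ∂μ := by
  rw [← dyadicI_succ_union] at hf ⊢
  exact setIntegral_union (disjoint_dyadicI_succ j m) (measurableSet_dyadicI _ _)
    hf.left_of_union hf.right_of_union

theorem sum_range_two_mul {M : Type*} [AddCommMonoid M] (f : ℕ → M) (n : ℕ) :
    ∑ k ∈ Finset.range (2 * n), f k = ∑ m ∈ Finset.range n, (f (2 * m) + f (2 * m + 1)) := by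
  induction n with
  | zero => simp
  | succ n ih =>
    rw [Nat.mul_succ, Finset.sum_range_succ, Finset.sum_range_succ, ih, Finset.sum_range_succ,
      add_assoc]

theorem sum_setIntegral_dyadicI {μ : Measure ℝ} {f : ℝ → ℝ} (hf : Integrable f μ) (j : ℕ) :
    ∑ m ∈ Finset.range (2 ^ j), ∫ x in dyadicI j m, f x ∂μ = ∫ x in Ico 0 1, f x ∂μ := by
  induction j with
  | zero => simp [dyadicI]
  | succ j ih =>
    rw [pow_succ', sum_range_two_mul, ← ih]
    exact Finset.sum_congr rfl fun m _ => (setIntegral_dyadicI_eq_add hf.integrableOn).symm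

end DyadicInterval

/-! ### The one-dimensional Haar expansion -/

section HaarExpansion

open ProbabilityTheory Filter Topology

/-- Lebesgue measure on `[0,1)`, as a measure on `ℝ`. -/
noncomputable abbrev unitMeasure : Measure ℝ :=
  volume.restrict (Ico 0 1)

instance : IsProbabilityMeasure unitMeasure :=
  ⟨by simp⟩

theorem real_unitMeasure_dyadicI {j m : ℕ} (hm : m < 2 ^ j) :
    unitMeasure.real (dyadicI j m) = (2 ^ j)⁻¹ := by
  have hm' : (m : ℝ) + 1 ≤ 2 ^ j := by exact_mod_cast hm
  have hsub : dyadicI j m ⊆ Ico 0 1 :=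
    Ico_subset_Ico (by positivity) ((div_le_one (by positivity)).2 hm')
  rw [measureReal_restrict_apply (measurableSet_dyadicI j m), inter_eq_left.2 hsub, dyadicI,
    Real.volume_real_Ico_of_le (by gcongr; linarith)]
  ring

/-- The coefficient `⟨f, h_{j,m}⟩` of a function of one variable, the case `d = 1` of `haarCoef`. -/
noncomputable def haarCoef1 (f : ℝ → ℝ) (j m : ℕ) : ℝ :=
  ∫ x, f x * haar1 j m x ∂unitMeasure

/-- The squared `L²` norm of the projection of `f` onto the functions that are constant on each
dyadic interval of level `j`. -/
noncomputable def dyadicEnergy (f : ℝ → ℝ) (j : ℕ) : ℝ :=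
  2 ^ j * ∑ m ∈ Finset.range (2 ^ j), (∫ x in dyadicI j m, f x ∂unitMeasure) ^ 2

/-- The contribution `2^j ∑_m ⟨f, h_{j,m}⟩ ⟨g, h_{j,m}⟩` of the Haar functions of level `j` to the
inner product of `f` and `g`. -/
noncomputable def haarLevel (f g : ℝ → ℝ) (j : ℕ) : ℝ :=
  2 ^ j * ∑ m ∈ Finset.range (2 ^ j), haarCoef1 f j m * haarCoef1 g j m

variable {f g : ℝ → ℝ}

theorem mul_haar1_eq_indicator_sub (f : ℝ → ℝ) (j m : ℕ) (x : ℝ) :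
    f x * haar1 j m x = (dyadicI (j + 1) (2 * m)).indicator f x
      - (dyadicI (j + 1) (2 * m + 1)).indicator f x := by
  rw [haar1_eq_indicator_sub, mul_sub]
  simp only [indicator, Pi.one_apply, mul_ite, mul_one, mul_zero]

theorem integrable_mul_haar1 {μ : Measure ℝ} (hf : Integrable f μ) (j m : ℕ) :
    Integrable (fun x => f x * haar1 j m x) μ := by
  simp only [mul_haar1_eq_indicator_sub]
  exact (hf.indicator (measurableSet_dyadicI _ _)).sub (hf.indicator (measurableSet_dyadicI _ _))

theorem haarCoef1_eq_sub (hf : Integrable f unitMeasure) (j m : ℕ) :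
    haarCoef1 f j m = (∫ x in dyadicI (j + 1) (2 * m), f x ∂unitMeasure)
      - ∫ x in dyadicI (j + 1) (2 * m + 1), f x ∂unitMeasure := by
  simp only [haarCoef1, mul_haar1_eq_indicator_sub]
  rw [integral_sub (hf.indicator (measurableSet_dyadicI _ _))
      (hf.indicator (measurableSet_dyadicI _ _)),
    integral_indicator (measurableSet_dyadicI _ _), integral_indicator (measurableSet_dyadicI _ _)]

theorem haarCoef1_add (hf : Integrable f unitMeasure) (hg : Integrable g unitMeasure) (j m : ℕ) :
    haarCoef1 (f + g) j m = haarCoef1 f j m + haarCoef1 g j m := by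
  simp only [haarCoef1, Pi.add_apply, add_mul]
  exact integral_add (integrable_mul_haar1 hf j m) (integrable_mul_haar1 hg j m)

theorem haarLevel_self_eq_dyadicEnergy_sub (hf : Integrable f unitMeasure) (j : ℕ) :
    haarLevel f f j = dyadicEnergy f (j + 1) - dyadicEnergy f j := by
  have hsplit (m : ℕ) :=
    setIntegral_dyadicI_eq_add (j := j) (m := m) (hf.integrableOn (s := dyadicI j m))
  simp only [haarLevel, dyadicEnergy, hsplit, haarCoef1_eq_sub hf, pow_succ' _ j, sum_range_two_mul,
    Finset.mul_sum, ← Finset.sum_sub_distrib]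
  refine Finset.sum_congr rfl fun m _ => ?_
  ring

theorem sum_range_haarLevel_self (hf : Integrable f unitMeasure) (n : ℕ) :
    ∑ j ∈ Finset.range n, haarLevel f f j =
      dyadicEnergy f n - (∫ x, f x ∂unitMeasure) ^ 2 := by
  simp only [haarLevel_self_eq_dyadicEnergy_sub hf, Finset.sum_range_sub]
  simp [dyadicEnergy, dyadicI]

theorem integral_sub_const_sq {α : Type*} [MeasurableSpace α] {μ : Measure α} [IsFiniteMeasure μ]
    [NeZero μ] {f : α → ℝ} (hf : MemLp f 2 μ) (c : ℝ) :
    ∫ x, (f x - c) ^ 2 ∂μ = (∫ x, f x ^ 2 ∂μ) - (μ.real univ)⁻¹ * (∫ x, f x ∂μ) ^ 2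
      + μ.real univ * (c - (μ.real univ)⁻¹ * ∫ x, f x ∂μ) ^ 2 := by
  have hint : Integrable (fun x => f x ^ 2 - 2 * c * f x) μ :=
    hf.integrable_sq.sub ((hf.integrable one_le_two).const_mul (2 * c))
  have hμ : μ.real univ ≠ 0 := measureReal_univ_ne_zero
  calc ∫ x, (f x - c) ^ 2 ∂μ = ∫ x, (f x ^ 2 - 2 * c * f x) + c ^ 2 ∂μ := by
        congr with x
        ring
    _ = (∫ x, f x ^ 2 ∂μ) - 2 * c * (∫ x, f x ∂μ) + μ.real univ * c ^ 2 := by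
        rw [integral_add hint (integrable_const _),
          integral_sub hf.integrable_sq ((hf.integrable one_le_two).const_mul _),
          integral_const_mul, integral_const, smul_eq_mul]
    _ = _ := by
        field_simp
        ring

theorem setIntegral_dyadicI_sub_const_sq (hf : MemLp f 2 unitMeasure) {j m : ℕ} (hm : m < 2 ^ j)
    (c : ℝ) :
    ∫ x in dyadicI j m, (f x - c) ^ 2 ∂unitMeasure =
      (∫ x in dyadicI j m, f x ^ 2 ∂unitMeasure)
        - 2 ^ j * (∫ x in dyadicI j m, f x ∂unitMeasure) ^ 2
        + (2 ^ j)⁻¹ * (c - 2 ^ j * ∫ x in dyadicI j m, f x ∂unitMeasure) ^ 2 := by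
  have hreal : (unitMeasure.restrict (dyadicI j m)).real univ = (2 ^ j)⁻¹ := by
    rw [measureReal_restrict_apply_univ, real_unitMeasure_dyadicI hm]
  have : NeZero (unitMeasure.restrict (dyadicI j m)) :=
    ⟨fun h => (by positivity : ((2 : ℝ) ^ j)⁻¹ ≠ 0) (by rw [← hreal, h, measureReal_zero_apply])⟩
  rw [integral_sub_const_sq (hf.restrict _), hreal, inv_inv]

theorem sum_setIntegral_dyadicI_sub_const_sq (hf : MemLp f 2 unitMeasure) (j : ℕ) (c : ℕ → ℝ) :
    ∑ m ∈ Finset.range (2 ^ j), ∫ x in dyadicI j m, (f x - c m) ^ 2 ∂unitMeasure =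
      (∫ x, f x ^ 2 ∂unitMeasure) - dyadicEnergy f j
        + (2 ^ j)⁻¹ * ∑ m ∈ Finset.range (2 ^ j),
            (c m - 2 ^ j * ∫ x in dyadicI j m, f x ∂unitMeasure) ^ 2 := by
  rw [Finset.sum_congr rfl fun m hm =>
      setIntegral_dyadicI_sub_const_sq hf (Finset.mem_range.1 hm) (c m),
    Finset.sum_add_distrib, Finset.sum_sub_distrib, sum_setIntegral_dyadicI hf.integrable_sq,
    Measure.restrict_restrict_of_subset subset_rfl, ← Finset.mul_sum, ← Finset.mul_sum,
    dyadicEnergy]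

theorem dyadicEnergy_le_integral_sq (hf : MemLp f 2 unitMeasure) (j : ℕ) :
    dyadicEnergy f j ≤ ∫ x, f x ^ 2 ∂unitMeasure := by
  have hproj := sum_setIntegral_dyadicI_sub_const_sq hf j
    fun m => 2 ^ j * ∫ x in dyadicI j m, f x ∂unitMeasure
  have hnonneg : 0 ≤ ∑ m ∈ Finset.range (2 ^ j), ∫ x in dyadicI j m,
      (f x - 2 ^ j * ∫ y in dyadicI j m, f y ∂unitMeasure) ^ 2 ∂unitMeasure :=
    Finset.sum_nonneg fun m _ => integral_nonneg fun x => sq_nonneg _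
  simp only [sub_self, ne_eq, OfNat.ofNat_ne_zero, not_false_eq_true, zero_pow,
    Finset.sum_const_zero, mul_zero, add_zero] at hproj
  linarith

theorem integral_sq_sub_dyadicEnergy_le (hf : MemLp f 2 unitMeasure) (j : ℕ) (c : ℕ → ℝ) :
    (∫ x, f x ^ 2 ∂unitMeasure) - dyadicEnergy f j ≤
      ∑ m ∈ Finset.range (2 ^ j), ∫ x in dyadicI j m, (f x - c m) ^ 2 ∂unitMeasure := by
  rw [sum_setIntegral_dyadicI_sub_const_sq hf j c]
  exact le_add_of_nonneg_right (by positivity)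

theorem sum_setIntegral_dyadicI_sub_const_sq_le (hf : MemLp f 2 unitMeasure)
    (hg : MemLp g 2 unitMeasure) {j : ℕ} {c : ℕ → ℝ} {ε : ℝ}
    (hgc : ∀ m, ∀ x ∈ dyadicI j m, (g x - c m) ^ 2 ≤ ε) :
    ∑ m ∈ Finset.range (2 ^ j), ∫ x in dyadicI j m, (f x - c m) ^ 2 ∂unitMeasure ≤
      2 * (∫ x, (f x - g x) ^ 2 ∂unitMeasure) + 2 * ε := by
  have hint : Integrable (fun x => 2 * (f x - g x) ^ 2) unitMeasure :=
    (hf.sub hg).integrable_sq.const_mul 2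
  have hint_add : Integrable (fun x => 2 * (f x - g x) ^ 2 + 2 * ε) unitMeasure :=
    hint.add (integrable_const _)
  have hpoint (m : ℕ) (x : ℝ) (hx : x ∈ dyadicI j m) :
      (f x - c m) ^ 2 ≤ 2 * (f x - g x) ^ 2 + 2 * ε := by
    have hsq := add_sq_le (a := f x - g x) (b := g x - c m)
    rw [sub_add_sub_cancel] at hsq
    linarith [hgc m x hx]
  calc ∑ m ∈ Finset.range (2 ^ j), ∫ x in dyadicI j m, (f x - c m) ^ 2 ∂unitMeasure
      ≤ ∑ m ∈ Finset.range (2 ^ j),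
          ∫ x in dyadicI j m, 2 * (f x - g x) ^ 2 + 2 * ε ∂unitMeasure :=
        Finset.sum_le_sum fun m _ => setIntegral_mono_on
          (hf.sub (memLp_const (c m))).integrable_sq.integrableOn hint_add.integrableOn
          (measurableSet_dyadicI j m) (hpoint m)
    _ = 2 * (∫ x, (f x - g x) ^ 2 ∂unitMeasure) + 2 * ε := by
        rw [sum_setIntegral_dyadicI hint_add, Measure.restrict_restrict_of_subset subset_rfl,
          integral_add hint (integrable_const _), integral_const_mul, integral_const, probReal_univ,
          one_smul]

theorem eventually_sq_sub_le_of_uniformContinuous (hg : UniformContinuous g) {ε : ℝ} (hε : 0 < ε) :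
    ∀ᶠ j : ℕ in atTop, ∀ m : ℕ, ∀ x ∈ dyadicI j m, (g x - g (m / 2 ^ j)) ^ 2 ≤ ε := by
  obtain ⟨δ, hδ, hgδ⟩ := Metric.uniformContinuous_iff.1 hg √ε (Real.sqrt_pos.2 hε)
  have hlen : Tendsto (fun j : ℕ => (1 / 2 : ℝ) ^ j) atTop (𝓝 0) :=
    tendsto_pow_atTop_nhds_zero_of_lt_one (by norm_num) (by norm_num)
  filter_upwards [hlen.eventually_lt_const hδ] with j hj m x hx
  have hdist : dist x (m / 2 ^ j) < δ := by
    rw [Real.dist_eq, abs_of_nonneg (sub_nonneg.2 hx.1)]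
    calc x - m / 2 ^ j < (m + 1) / 2 ^ j - m / 2 ^ j := sub_lt_sub_right hx.2 _
      _ = (1 / 2) ^ j := by rw [← sub_div, add_sub_cancel_left, one_div_pow]
      _ < δ := hj
  rw [← sq_abs, ← Real.dist_eq]
  exact (Real.le_sqrt dist_nonneg hε.le).1 (hgδ hdist).le

theorem tendsto_dyadicEnergy (hf : MemLp f 2 unitMeasure) :
    Tendsto (dyadicEnergy f) atTop (𝓝 (∫ x, f x ^ 2 ∂unitMeasure)) := by
  refine tendsto_order.2 ⟨fun a ha => ?_, fun a ha =>
    .of_forall fun j => (dyadicEnergy_le_integral_sq hf j).trans_lt ha⟩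
  obtain ⟨ε, hε, haε⟩ : ∃ ε > 0, a + 4 * ε < ∫ x, f x ^ 2 ∂unitMeasure :=
    ⟨((∫ x, f x ^ 2 ∂unitMeasure) - a) / 5, by linarith, by linarith⟩
  obtain ⟨g, hg_supp, hfg, hg_cont, hg⟩ :=
    MemLp.exists_hasCompactSupport_integral_rpow_sub_le two_pos (by simpa using hf) hε
  simp only [Real.norm_eq_abs, Real.rpow_two, sq_abs] at hfg
  rw [ENNReal.ofReal_ofNat] at hg
  have hg_unif := hg_supp.uniformContinuous_of_continuous hg_cont
  filter_upwards [eventually_sq_sub_le_of_uniformContinuous hg_unif hε] with j hj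
  have hdefect := (integral_sq_sub_dyadicEnergy_le hf j _).trans
    (sum_setIntegral_dyadicI_sub_const_sq_le hf hg hj)
  linarith

theorem hasSum_haarLevel_self (hf : MemLp f 2 unitMeasure) :
    HasSum (haarLevel f f) cov[f, f; unitMeasure] := by
  have hnonneg (j : ℕ) : 0 ≤ haarLevel f f j :=
    mul_nonneg (by positivity) (Finset.sum_nonneg fun m _ => mul_self_nonneg _)
  rw [hasSum_iff_tendsto_nat_of_nonneg hnonneg, covariance_self hf.aemeasurable, variance_eq_sub hf]
  simp only [sum_range_haarLevel_self (hf.integrable one_le_two)]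
  exact (tendsto_dyadicEnergy hf).sub_const _

theorem hasSum_haarLevel (hf : MemLp f 2 unitMeasure) (hg : MemLp g 2 unitMeasure) :
    HasSum (haarLevel f g) cov[f, g; unitMeasure] := by
  have hpolar := (((hasSum_haarLevel_self (hf.add hg)).sub (hasSum_haarLevel_self hf)).sub
    (hasSum_haarLevel_self hg)).div_const 2
  have hlevel (j : ℕ) : haarLevel f g j =
      (haarLevel (f + g) (f + g) j - haarLevel f f j - haarLevel g g j) / 2 := by
    simp only [haarLevel, haarCoef1_add (hf.integrable one_le_two) (hg.integrable one_le_two),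
      Finset.mul_sum, ← Finset.sum_sub_distrib, Finset.sum_div]
    refine Finset.sum_congr rfl fun m _ => ?_
    ring
  have hcov : cov[f, g; unitMeasure] = (cov[f + g, f + g; unitMeasure]
      - cov[f, f; unitMeasure] - cov[g, g; unitMeasure]) / 2 := by
    rw [covariance_add_left hf hg (hf.add hg), covariance_add_right hf hf hg,
      covariance_add_right hg hf hg, covariance_comm g f]
    ring
  rw [hcov]
  exact hpolar.congr_fun hlevel

end HaarExpansion

/-! ### The Haar expansion of a sum of tensor products -/

section TensorHaar

open ProbabilityTheory

theorem hasSum_prod_pi {d : ℕ} {κ : Fin d → Type*} {s : ∀ k, κ k → ℝ} {v : Fin d → ℝ}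
    (h : ∀ k, HasSum (s k) (v k)) :
    HasSum (fun j : ∀ k, κ k => ∏ k, s k (j k)) (∏ k, v k) := by
  induction d with
  | zero => simp
  | succ d ih =>
    have htail := ih fun k => h k.succ
    have hsummable := summable_mul_of_summable_norm (h 0).summable.norm htail.summable.norm
    rw [Fin.prod_univ_succ, ← (Fin.consEquiv κ).hasSum_iff]
    exact ((h 0).mul htail hsummable).congr_fun fun p => Fin.prod_univ_succ _

variable {ι : Type*} [Fintype ι] {d : ℕ} {f : ι → Fin d → ℝ → ℝ}

theorem restrict_unitBox_eq_pi (d : ℕ) :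
    volume.restrict (unitBox d) = Measure.pi fun _ => unitMeasure := by
  rw [volume_pi, unitBox, Measure.restrict_pi_pi]

theorem haarCoef_tensorSum (c : ι → ℝ) (hf : ∀ a k, Integrable (f a k) unitMeasure)
    (j m : Fin d → ℕ) :
    haarCoef (tensorSum c f) j m = ∑ a, c a * ∏ k, haarCoef1 (f a k) (j k) (m k) := by
  have hmul (x : Fin d → ℝ) : tensorSum c f x * haarD j m x =
      tensorSum c (fun a k t => f a k t * haar1 (j k) (m k) t) x := by
    simp only [tensorSum, haarD, Finset.sum_mul, Finset.prod_mul_distrib, mul_assoc]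
  simp only [haarCoef, hmul, restrict_unitBox_eq_pi]
  exact integral_tensorSum c fun a k => integrable_mul_haar1 (hf a k) (j k) (m k)

theorem two_pow_mul_sum_haarCoef_tensorSum_sq (c : ι → ℝ)
    (hf : ∀ a k, Integrable (f a k) unitMeasure) (j : Fin d → ℕ) :
    (2 : ℝ) ^ (∑ i, j i) * ∑ m ∈ Fintype.piFinset (fun i => Finset.range (2 ^ j i)),
        haarCoef (tensorSum c f) j m ^ 2 =
      ∑ p : ι × ι, c p.1 * c p.2 * ∏ k, haarLevel (f p.1 k) (f p.2 k) (j k) := by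
  simp only [haarCoef_tensorSum c hf, sum_mul_prod_sq]
  rw [Finset.sum_comm, Finset.mul_sum]
  refine Finset.sum_congr rfl fun p _ => ?_
  simp only [haarLevel]
  rw [← Finset.mul_sum, Finset.prod_mul_distrib, Finset.prod_univ_sum, Finset.prod_pow_eq_pow_sum,
    mul_left_comm]

theorem hasSum_haarCoef_tensorSum_sq (c : ι → ℝ) (hf : ∀ a k, MemLp (f a k) 2 unitMeasure) :
    HasSum
      (fun j : Fin d → ℕ => (2 : ℝ) ^ (∑ i, j i) *
        ∑ m ∈ Fintype.piFinset (fun i => Finset.range (2 ^ j i)),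
          haarCoef (tensorSum c f) j m ^ 2)
      (∫ x in unitBox d, ∫ y in unitBox d, if x ≤ y then tensorIncrement c f x y ^ 2 else 0) := by
  simp only [two_pow_mul_sum_haarCoef_tensorSum_sq c fun a k => (hf a k).integrable one_le_two,
    restrict_unitBox_eq_pi, integral_integral_tensorIncrement_sq c hf]
  exact hasSum_sum fun p _ =>
    (hasSum_prod_pi fun k => hasSum_haarLevel (hf p.1 k) (hf p.2 k)).mul_left _

end TensorHaar

/-! ### The discrepancy function as a sum of tensor products -/

section Discrepancy

variable {d N : ℕ} {P : Fin N → Fin d → ℝ}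

/-- The weights that express the discrepancy of `N` points as a `tensorSum`: `some i` stands for the
`i`-th point and `none` for the volume term. -/
noncomputable def discWeight (N : ℕ) : Option (Fin N) → ℝ
  | none => -1
  | some _ => 1 / N

/-- The one-variable factors that express the discrepancy of `P` as a `tensorSum`, indexed as in
`discWeight`. -/
noncomputable def discFactor (P : Fin N → Fin d → ℝ) : Option (Fin N) → Fin d → ℝ → ℝ
  | none, _ => id
  | some i, k => (Ioi (P i k)).indicator 1

theorem memLp_discFactor (P : Fin N → Fin d → ℝ) (a : Option (Fin N)) (k : Fin d) :
    MemLp (discFactor P a k) 2 unitMeasure := by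
  cases a with
  | none =>
    refine memLp_of_bounded (a := 0) (b := 1) ?_ aestronglyMeasurable_id 2
    exact (ae_restrict_mem measurableSet_Ico).mono fun x hx => Ico_subset_Icc_self hx
  | some i => exact (memLp_const 1).indicator measurableSet_Ioi

theorem discAnch_eq_tensorSum (hP : ∀ i, P i ∈ unitBox d) :
    discAnch P = tensorSum (discWeight N) (discFactor P) := by
  have hnonneg (i : Fin N) (k : Fin d) : 0 ≤ P i k := (hP i k (mem_univ k)).1
  funext t
  simp only [discAnch, tensorSum, Fintype.sum_option, discWeight, discFactor, id, indicator,
    mem_Ioi, Pi.one_apply, Finset.prod_ite_zero, ← Finset.mul_sum, Finset.mem_univ, true_imp_iff,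
    hnonneg, true_and, Finset.prod_const_one, Finset.sum_boole]
  ring

theorem discFactor_some_sub {x y : Fin d → ℝ} (hxy : x ≤ y) (i : Fin N) (k : Fin d) :
    discFactor P (some i) k (y k) - discFactor P (some i) k (x k) =
      if x k ≤ P i k ∧ P i k < y k then 1 else 0 := by
  have := hxy k
  simp only [discFactor, indicator, mem_Ioi, Pi.one_apply]
  grind

theorem discBoxFn_eq_tensorIncrement {x y : Fin d → ℝ} (hxy : x ≤ y) :
    discBoxFn P x y = tensorIncrement (discWeight N) (discFactor P) x y := by
  simp only [discBoxFn, tensorIncrement, Fintype.sum_option, discFactor_some_sub hxy]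
  simp only [discWeight, discFactor, id, Finset.prod_ite_zero, ← Finset.mul_sum, Finset.mem_univ,
    true_imp_iff, Finset.prod_const_one, Finset.sum_boole]
  ring

theorem L2extrSq_eq_integral_tensorIncrement_sq (P : Fin N → Fin d → ℝ) :
    L2extrSq P = ∫ x in unitBox d, ∫ y in unitBox d,
      if x ≤ y then tensorIncrement (discWeight N) (discFactor P) x y ^ 2 else 0 := by
  unfold L2extrSq
  congr! 5 with x y hxy
  rw [discBoxFn_eq_tensorIncrement hxy]

end Discrepancy

theorem haar_expansion_extreme_L2 (d N : ℕ) (hd : 1 ≤ d)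
    (P : Fin N → Fin d → ℝ) (hP : ∀ i, P i ∈ unitBox d) :
    L2extrSq P
      = ∑' j : Fin d → ℕ, (2 : ℝ) ^ (∑ i, j i) *
          ∑ m ∈ Fintype.piFinset (fun i => Finset.range (2 ^ j i)),
            (haarCoef (discAnch P) j m) ^ 2 := by
  rw [L2extrSq_eq_integral_tensorIncrement_sq, discAnch_eq_tensorSum hP]
  exact (hasSum_haarCoef_tensorSum_sq (discWeight N) (memLp_discFactor P)).tsum_eq.symm
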